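/- arXiv:1903.11677 — 2 statements merged into one kernel-verified Lean document; each statement's English description precedes it below -/
import Mathlib

section
/- Let f be a natural number. Suppose G is (⌊3f/2⌋ + 1)-connected and every vertex of G has degree at least 2f. Let F ⊆ V with |F| ≤ f, let Z ⊆ V and N = V ∖ Z, let v ∈ V, and define sets A, B ⊆ V by the following four exhaustive cases: if |Z ∩ F| ≤ ⌊f/2⌋ and |N| > f, then A = N and B = Z; if |Z ∩ F| ≤ ⌊f/2⌋ and |N| ≤ f, then A = Z and B = N; if |Z ∩ F| > ⌊f/2⌋ and |Z| > f, then A = Z and B = N; if |Z ∩ F| > ⌊f/2⌋ and |Z| ≤ f, then A = N and B = Z. If v ∈ B, then there exist f + 1 node-disjoint A–v paths in G, each of which excludes F. -/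
/-!
In each of the four cases `A` and `B` are complementary, so `v ∉ A`.

* If `|B| ≤ f`, the vertex `v` has at most `f - 1` neighbors in `B`, hence at least `f + 1`
  neighbors in `A`, and single edges serve as the paths (`paths_of_card_le`).
* If `|A| > f`, then `|B ∩ F| ≤ ⌊f / 2⌋`. Removing `B ∩ F` (except possibly `v`) leaves a graph
  that is still `(f + 1)`-connected, so the fan version of Menger's theorem yields `f + 1` paths
  whose vertices other than `v` avoid `B ∩ F` and which meet `A` only at their first vertex
  (`paths_of_lt_card`).

The fan theorem (`exists_fan`) is derived from Hall's marriage theorem, in the spirit of the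
Ingleton–Piff duality between linkings and transversals. Adjoin `k` extra tokens to `V`, which
serve both as copies of `v` from which the paths leave and as sinks reached from `A`. Hall's theorem
applied to the relation `FanStep` gives an injective self-map `g` of `V ⊕ Fin k`, whose value at a
vertex is the vertex itself, a permitted neighbor, or (on `A`) a token. The orbit of each token
under `g` runs through permitted vertices until it reaches `A` and then a token; these stretches are
pairwise disjoint because `g` is injective, and each of them, read backwards, is a path from `A`
to `v`. Hall's condition says exactly that every set `D ∋ v` disjoint from `A` has at least `k`
permitted boundary vertices.
-/


/-- `G` is `k`-connected: `|V| > k` and removing any set of fewer than `k`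
vertices leaves the induced subgraph connected. -/
def KConnected {V : Type*} [Fintype V] (G : SimpleGraph V) (k : ℕ) : Prop :=
  k < Fintype.card V ∧
    ∀ S : Finset V, S.card < k → (G.induce ((↑S : Set V)ᶜ)).Connected

open Finset

/-- The permitted moves of the matching behind the fan theorem. A token moves to a neighbor of `v`
outside `X`. A vertex may stay put; outside `A` it may move to a neighbor that is neither `v` nor
in `X`, and in `A` it may move to any token. -/
def FanStep {V : Type*} (G : SimpleGraph V) (A X : Finset V) (v : V) (k : ℕ) :
    V ⊕ Fin k → V ⊕ Fin k → Prop
  | .inr _, .inl y => G.Adj v y ∧ y ∉ X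
  | .inr _, .inr _ => False
  | .inl x, .inl y => x = y ∨ (x ∉ A ∧ G.Adj x y ∧ y ≠ v ∧ y ∉ X)
  | .inl x, .inr _ => x ∈ A

/-- Hall's theorem for `FanStep`. A family containing a token and disjoint from `A` is the only
nontrivial case: its neighborhood contains its own vertices and their boundary. -/
lemma exists_injective_fanStep {V : Type*} [Fintype V] [DecidableEq V]
    (G : SimpleGraph V) [DecidableRel G.Adj] (A X : Finset V) (v : V) (k : ℕ)
    (hbd : ∀ D : Finset V, v ∈ D → Disjoint D A →
      k ≤ #{y | (y ∉ D ∧ y ∉ X) ∧ ∃ x ∈ D, G.Adj x y}) (hvA : v ∉ A) :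
    ∃ g : V ⊕ Fin k → V ⊕ Fin k, Function.Injective g ∧ ∀ x, FanStep G A X v k x (g x) := by
  classical
  rw [← Fintype.all_card_le_filter_rel_iff_exists_injective]
  intro S
  rw [← S.card_toLeft_add_card_toRight]
  have hR : #S.toRight ≤ k := by simpa using S.toRight.card_le_univ
  by_cases hA : ∃ a ∈ S.toLeft, a ∈ A
  · obtain ⟨a, haS, haA⟩ := hA
    calc _ ≤ #(S.toLeft.disjSum (univ : Finset (Fin k))) := by simpa using hR
      _ ≤ _ := by
        apply card_le_card
        rintro (y | j) hy
        · simp only [inl_mem_disjSum, mem_toLeft] at hy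
          simp only [mem_filter, mem_univ, true_and]
          exact ⟨_, hy, Or.inl rfl⟩
        · simp only [mem_filter, mem_univ, true_and]
          exact ⟨_, mem_toLeft.1 haS, haA⟩
  push Not at hA
  rcases S.toRight.eq_empty_or_nonempty with h0 | ⟨i, hi⟩
  · calc _ ≤ #(S.toLeft.disjSum (∅ : Finset (Fin k))) := by simp [h0]
      _ ≤ _ := by
        apply card_le_card
        rintro (y | j) hy
        · simp only [inl_mem_disjSum, mem_toLeft] at hy
          simp only [mem_filter, mem_univ, true_and]
          exact ⟨_, hy, Or.inl rfl⟩
        · simp at hy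
  · have hD := hbd (insert v S.toLeft) (mem_insert_self _ _) (by
      rw [Finset.disjoint_left]
      intro x hx
      rcases mem_insert.1 hx with rfl | hx
      · exact hvA
      · exact hA x hx)
    set bd := ({y | (y ∉ insert v S.toLeft ∧ y ∉ X) ∧
      ∃ x ∈ insert v S.toLeft, G.Adj x y} : Finset V) with hbd'
    have hdis : Disjoint S.toLeft bd := by
      rw [Finset.disjoint_left]
      intro x hx hx'
      exact (mem_filter.1 hx').2.1.1 (mem_insert_of_mem hx)
    calc _ ≤ #((S.toLeft ∪ bd).disjSum (∅ : Finset (Fin k))) := by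
          rw [card_disjSum, card_union_of_disjoint hdis, card_empty]
          omega
      _ ≤ _ := by
        apply card_le_card
        rintro (y | j) hy
        · simp only [inl_mem_disjSum, mem_union] at hy
          simp only [mem_filter, mem_univ, true_and]
          rcases hy with hy | hy
          · exact ⟨_, mem_toLeft.1 hy, Or.inl rfl⟩
          · obtain ⟨-, ⟨hyD, hyX⟩, x, hx, hxy⟩ := mem_filter.1 hy
            rcases mem_insert.1 hx with rfl | hx
            · exact ⟨_, mem_toRight.1 hi, hxy, hyX⟩
            · exact ⟨_, mem_toLeft.1 hx,
                Or.inr ⟨hA x hx, hxy, fun h => hyD (h ▸ mem_insert_self _ _), hyX⟩⟩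
        · simp at hy

/-- As long as the orbit of the token `i` has not met another token, its vertices, read backwards,
carry a walk to `v`, of which only the first vertex can lie in `A`. -/
lemma exists_walk_of_orbit {V : Type*} (G : SimpleGraph V) (A X : Finset V) (v : V) (k : ℕ)
    (g : V ⊕ Fin k → V ⊕ Fin k) (hg : Function.Injective g)
    (hstep : ∀ x, FanStep G A X v k x (g x)) (i : Fin k) (m : ℕ)
    (hm : ∀ t, 1 ≤ t → t ≤ m + 1 → (g^[t] (Sum.inr i)).isLeft) :
    ∃ u, g^[m + 1] (Sum.inr i) = Sum.inl u ∧ ∃ p : G.Walk u v, ∀ w ∈ p.support, w ≠ v →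
      w ∉ X ∧ (w ∈ A → w = u) ∧ ∃ t, 1 ≤ t ∧ t ≤ m + 1 ∧ g^[t] (Sum.inr i) = Sum.inl w := by
  induction m with
  | zero =>
    obtain ⟨u, hu⟩ := Sum.isLeft_iff.1 (hm 1 le_rfl le_rfl)
    have h := hstep (Sum.inr i)
    rw [Function.iterate_one] at hu
    rw [hu] at h
    obtain ⟨hadj, hX⟩ := h
    refine ⟨u, hu, .cons hadj.symm .nil, fun w hw hwv => ?_⟩
    have : w = u := by simpa [hwv] using hw
    subst this
    exact ⟨hX, fun _ => rfl, 1, le_rfl, le_rfl, hu⟩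
  | succ m ih =>
    obtain ⟨u, hu, p, hp⟩ := ih fun t h1 h2 => hm t h1 (by omega)
    obtain ⟨u', hu'⟩ := Sum.isLeft_iff.1 (hm (m + 2) (by omega) le_rfl)
    have hgu : g (Sum.inl u) = Sum.inl u' := by
      rw [← hu, ← Function.iterate_succ_apply' g, hu']
    have h := hstep (Sum.inl u)
    rw [hgu] at h
    rcases h with h | ⟨huA, hadj, hv, hX⟩
    · -- A fixed point of an injective map cannot occur in the orbit of a different point.
      exfalso
      subst h
      have hfix : g^[m + 1] (Sum.inl u) = Sum.inl u := Function.iterate_fixed hgu _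
      have := hg.iterate (m + 1) (hu.trans hfix.symm)
      simp at this
    · refine ⟨u', hu', .cons hadj.symm p, fun w hw hwv => ?_⟩
      rw [SimpleGraph.Walk.support_cons, List.mem_cons] at hw
      rcases hw with rfl | hw
      · exact ⟨hX, fun _ => rfl, m + 2, by omega, le_rfl, hu'⟩
      · obtain ⟨h1, h2, t, h3, h4, h5⟩ := hp w hw hwv
        exact ⟨h1, fun hA => absurd (h2 hA ▸ hA) huA, t, h3, by omega, h5⟩

/-- The fan version of Menger's theorem, with forbidden vertices `X` and the separation hypothesis
phrased through boundaries. -/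
lemma exists_fan {V : Type*} [Fintype V] [DecidableEq V]
    (G : SimpleGraph V) [DecidableRel G.Adj] (A X : Finset V) (v : V) (k : ℕ)
    (hbd : ∀ D : Finset V, v ∈ D → Disjoint D A →
      k ≤ #{y | (y ∉ D ∧ y ∉ X) ∧ ∃ x ∈ D, G.Adj x y}) (hvA : v ∉ A) :
    ∃ (e : Fin k → V) (P : ∀ i, G.Walk (e i) v),
      (∀ i, e i ∈ A) ∧ (∀ i, (P i).IsPath) ∧
      (∀ i j, i ≠ j → ∀ w, w ∈ (P i).support → w ∈ (P j).support → w = v) ∧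
      (∀ i, ∀ w ∈ (P i).support, w ≠ v → w ∉ X ∧ (w ∈ A → w = e i)) := by
  classical
  obtain ⟨g, hg, hstep⟩ := exists_injective_fanStep G A X v k hbd hvA
  have hret : ∀ i : Fin k, ∃ n, 1 ≤ n ∧ (g^[n] (Sum.inr i)).isRight := by
    intro i
    obtain ⟨n, hn, hper⟩ := hg.mem_periodicPts (Sum.inr i)
    exact ⟨n, hn, by rw [hper.eq]; rfl⟩
  -- For each token, stop the orbit just before its first return to a token.
  have key : ∀ i : Fin k, ∃ m u, u ∈ A ∧ (∀ t, 1 ≤ t → t ≤ m → (g^[t] (Sum.inr i)).isLeft) ∧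
      ∃ p : G.Walk u v, ∀ w ∈ p.support, w ≠ v →
      w ∉ X ∧ (w ∈ A → w = u) ∧ ∃ t, 1 ≤ t ∧ t ≤ m ∧ g^[t] (Sum.inr i) = Sum.inl w := by
    intro i
    obtain ⟨h1, h2⟩ := Nat.find_spec (hret i)
    have hmin := fun t (ht : t < Nat.find (hret i)) => Nat.find_min (hret i) ht
    generalize Nat.find (hret i) = n at h1 h2 hmin
    obtain ⟨j, hj⟩ := Sum.isRight_iff.1 h2
    have hn : 2 ≤ n := by
      by_contra hlt
      obtain rfl : n = 1 := by omega
      have h := hstep (Sum.inr i)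
      rw [Function.iterate_one] at hj
      rw [hj] at h
      exact h
    obtain ⟨m, rfl⟩ : ∃ m, n = m + 2 := ⟨n - 2, by omega⟩
    have hleft : ∀ t, 1 ≤ t → t ≤ m + 1 → (g^[t] (Sum.inr i)).isLeft := by
      intro t ht1 ht2
      have := hmin t (by omega)
      simpa [ht1] using this
    obtain ⟨u, hu, p, hp⟩ := exists_walk_of_orbit G A X v k g hg hstep i m hleft
    refine ⟨m + 1, u, ?_, hleft, p, hp⟩
    have h := hstep (Sum.inl u)
    rw [← hu, ← Function.iterate_succ_apply' g, hj, hu] at h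
    exact h
  choose m e heA hleft p hp using key
  have hdisj : ∀ i j t s, t ≤ s → s ≤ m j →
      g^[t] (Sum.inr i) = g^[s] (Sum.inr j) → i = j := by
    intro i j t s hts hs h
    obtain ⟨d, rfl⟩ := Nat.exists_eq_add_of_le hts
    rw [Function.iterate_add_apply] at h
    have h' := hg.iterate t h
    rcases Nat.eq_zero_or_pos d with rfl | hd
    · simpa using h'
    · have := hleft j d hd (by omega)
      rw [← h'] at this
      simp at this
  refine ⟨e, fun i => (p i).bypass, heA, fun i => (p i).bypass_isPath, ?_, ?_⟩
  · intro i j hij w hwi hwj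
    by_contra hwv
    obtain ⟨-, -, t, -, ht, hti⟩ := hp i w ((p i).support_bypass_subset_support hwi) hwv
    obtain ⟨-, -, s, -, hs, hsj⟩ := hp j w ((p j).support_bypass_subset_support hwj) hwv
    rcases le_total t s with h | h
    · exact hij (hdisj i j t s h hs (hti.trans hsj.symm))
    · exact hij (hdisj j i s t h ht (hsj.trans hti.symm)).symm
  · intro i w hw hwv
    obtain ⟨h1, h2, -⟩ := hp i w ((p i).support_bypass_subset_support hw) hwv
    exact ⟨h1, h2⟩

lemma paths_of_lt_card {V : Type*} [Fintype V] [DecidableEq V]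
    (G : SimpleGraph V) [DecidableRel G.Adj] (f : ℕ)
    (hconn : KConnected G (3 * f / 2 + 1)) (F A : Finset V)
    (hF : #(Aᶜ ∩ F) ≤ f / 2) (hA : f < #A) (v : V) (hv : v ∉ A) :
    ∃ (e : Fin (f + 1) → V) (P : ∀ i, G.Walk (e i) v),
      (∀ i, e i ∈ A) ∧
      (∀ i, (P i).IsPath) ∧
      (∀ i j, i ≠ j → ∀ w, w ∈ (P i).support → w ∈ (P j).support → w = v) ∧
      (∀ i, ∀ w ∈ (P i).support, w ∈ F → w = e i ∨ w = v) := by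
  obtain ⟨e, P, h1, h2, h3, h4⟩ := exists_fan G A (Aᶜ ∩ F) v (f + 1) (by
    intro D hvD hDA
    by_contra hlt
    set bd := ({y | (y ∉ D ∧ y ∉ Aᶜ ∩ F) ∧ ∃ x ∈ D, G.Adj x y} : Finset V) with hbd
    -- A small boundary, together with the forbidden vertices, would separate `v` from `A`.
    set C := bd ∪ (Aᶜ ∩ F).erase v with hC
    have hCcard : #C < 3 * f / 2 + 1 := by
      have : #C ≤ _ := card_union_le bd ((Aᶜ ∩ F).erase v)
      have := card_erase_le (s := Aᶜ ∩ F) (a := v)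
      omega
    have hvC : v ∉ C := by simp [hC, hbd, hvD]
    obtain ⟨a, haA, habd⟩ : ∃ a ∈ A, a ∉ bd := by
      by_contra! h
      have := card_le_card (show A ⊆ bd from h)
      omega
    have haC : a ∉ C := by simp [hC, habd, haA]
    have haD : a ∉ D := fun h => Finset.disjoint_left.1 hDA h haA
    obtain ⟨q⟩ := (hconn.2 C hCcard).preconnected ⟨v, by simpa using hvC⟩ ⟨a, by simpa using haC⟩
    obtain ⟨d, -, hd1, hd2⟩ := q.exists_boundary_dart {x | (x : V) ∈ D} hvD haD
    have hyC : (d.snd : V) ∉ C := fun h => d.snd.2 (mem_coe.2 h)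
    have hyD : (d.snd : V) ∉ D := hd2
    have hadj : G.Adj d.fst d.snd := d.adj
    have hyv : (d.snd : V) ≠ v := fun h => hyD (h ▸ hvD)
    have hyX : (d.snd : V) ∉ Aᶜ ∩ F := fun h =>
      hyC (mem_union_right _ (mem_erase.2 ⟨hyv, h⟩))
    exact hyC (mem_union_left _ (mem_filter.2 ⟨mem_univ _, ⟨hyD, hyX⟩, _, hd1, hadj⟩))) hv
  refine ⟨e, P, h1, h2, h3, fun i w hw hwF => ?_⟩
  by_cases hwv : w = v
  · exact Or.inr hwv
  · obtain ⟨hX, hwA⟩ := h4 i w hw hwv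
    refine Or.inl (hwA ?_)
    by_contra h
    exact hX (mem_inter.2 ⟨mem_compl.2 h, hwF⟩)

lemma paths_of_card_le {V : Type*} [Fintype V] [DecidableEq V]
    (G : SimpleGraph V) [DecidableRel G.Adj] (f : ℕ)
    (hdeg : ∀ x : V, 2 * f ≤ G.degree x) (F A : Finset V)
    (hA : #Aᶜ ≤ f) (v : V) (hv : v ∉ A) :
    ∃ (e : Fin (f + 1) → V) (P : ∀ i, G.Walk (e i) v),
      (∀ i, e i ∈ A) ∧
      (∀ i, (P i).IsPath) ∧
      (∀ i j, i ≠ j → ∀ w, w ∈ (P i).support → w ∈ (P j).support → w = v) ∧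
      (∀ i, ∀ w ∈ (P i).support, w ∈ F → w = e i ∨ w = v) := by
  have hcard : f + 1 ≤ #(G.neighborFinset v ∩ A) := by
    have h1 : G.neighborFinset v ⊆ (G.neighborFinset v ∩ A) ∪ Aᶜ.erase v := by
      intro x hx
      have hne : x ≠ v := by
        rintro rfl
        simp at hx
      by_cases hxA : x ∈ A
      · exact mem_union_left _ (mem_inter.2 ⟨hx, hxA⟩)
      · exact mem_union_right _ (mem_erase.2 ⟨hne, mem_compl.2 hxA⟩)
    have h2 := (card_le_card h1).trans (card_union_le _ _)
    have h3 := card_erase_add_one (mem_compl.2 hv)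
    have h4 := hdeg v
    rw [← G.card_neighborFinset_eq_degree] at h4
    omega
  obtain ⟨T, hT, hTc⟩ := exists_subset_card_eq hcard
  let e := (T.equivFinOfCardEq hTc).symm
  have hmem : ∀ i, G.Adj (e i) v ∧ (e i : V) ∈ A := by
    intro i
    have := mem_inter.1 (hT (e i).2)
    exact ⟨((G.mem_neighborFinset _ _).1 this.1).symm, this.2⟩
  refine ⟨fun i => e i, fun i => .cons (hmem i).1 .nil, fun i => (hmem i).2, fun i => ?_, ?_, ?_⟩
  · simp [(hmem i).1.ne]
  · intro i j hij w hwi hwj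
    simp only [SimpleGraph.Walk.support_cons, SimpleGraph.Walk.support_nil, List.mem_cons,
      List.not_mem_nil, or_false] at hwi hwj
    rcases hwi with rfl | h
    · rcases hwj with h | h
      · exact absurd (e.injective (Subtype.ext h)) hij
      · exact h
    · exact h
  · intro i w hw _
    simpa using hw

theorem disjoint_paths_to_B_node {V : Type*} [Fintype V] [DecidableEq V]
    (G : SimpleGraph V) [DecidableRel G.Adj] (f : ℕ)
    (hconn : KConnected G (3 * f / 2 + 1))
    (hdeg : ∀ x : V, 2 * f ≤ G.degree x)
    (F : Finset V) (hF : F.card ≤ f)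
    (Z N A B : Finset V) (hN : N = Zᶜ)
    (h1 : (Z ∩ F).card ≤ f / 2 → f < N.card → A = N ∧ B = Z)
    (h2 : (Z ∩ F).card ≤ f / 2 → N.card ≤ f → A = Z ∧ B = N)
    (h3 : f / 2 < (Z ∩ F).card → f < Z.card → A = Z ∧ B = N)
    (h4 : f / 2 < (Z ∩ F).card → Z.card ≤ f → A = N ∧ B = Z)
    (v : V) (hv : v ∈ B) :
    ∃ (e : Fin (f + 1) → V) (P : ∀ i, G.Walk (e i) v),
      (∀ i, e i ∈ A) ∧
      (∀ i, (P i).IsPath) ∧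
      (∀ i j, i ≠ j → ∀ w, w ∈ (P i).support → w ∈ (P j).support → w = v) ∧
      (∀ i, ∀ w ∈ (P i).support, w ∈ F → w = e i ∨ w = v) := by
  subst hN
  rcases le_or_gt (Z ∩ F).card (f / 2) with hZ | hZ
  · rcases lt_or_ge f (Zᶜ).card with hc | hc
    · obtain ⟨rfl, rfl⟩ := h1 hZ hc
      exact paths_of_lt_card G f hconn F _ (by simpa using hZ) hc v (by simpa using hv)
    · obtain ⟨rfl, rfl⟩ := h2 hZ hc
      exact paths_of_card_le G f hdeg F _ hc v (by simpa using hv)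
  · rcases lt_or_ge f Z.card with hc | hc
    · obtain ⟨rfl, rfl⟩ := h3 hZ hc
      refine paths_of_lt_card G f hconn F _ ?_ hc v (by simpa using hv)
      have hsplit : #(A ∩ F) + #(Aᶜ ∩ F) = #F := by
        rw [← card_union_of_disjoint, ← union_inter_distrib_right, union_compl, univ_inter]
        exact disjoint_compl_right.mono inter_subset_left inter_subset_left
      omega
    · obtain ⟨rfl, rfl⟩ := h4 hZ hc
      exact paths_of_card_le G f hdeg F _ (by simpa using hc) v (by simpa using hv)
end

section
/- Let f and t be natural numbers with 1 ≤ t ≤ f, and suppose every nonempty set S ⊆ V with |S| ≤ t has at least 2f + 1 neighbors in G. Let T and F' be disjoint subsets of V with |T| ≤ t and |F'| ≤ f − |T|. Let B' ⊆ V ∖ (T ∪ F') with |B'| ≤ t and v ∈ B', and let A = V ∖ (T ∪ F' ∪ B'). Then there exist f + 1 node-disjoint A–v paths in G all of whose internal vertices lie in B' ∖ {v}. -/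
/-!
The existence of the fan is a Menger-type statement; it is reduced to Hall's marriage theorem.

Put `U = (T ∪ F')ᶜ \ {v}` and `C = B' \ {v}`. Consider the bipartite graph whose left side consists
of `f + 1` copies of `v`, each joined to the neighbours of `v` in `U`, and of the vertices `x ∈ C`,
each joined to `x` itself and to the neighbours of `x` in `U`. A set of left vertices made of `S ⊆ C`
alone is joined to `S`. Together with at least one copy of `v`, it is joined to the disjoint sets
`S` and `N(S ∪ {v}) \ (T ∪ F')`, the latter having at least `(2f + 1) - f = f + 1` elements. So Hall's
condition holds, and there are distinct vertices `g 0, …, g f` adjacent to `v` and an injection `σ`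
on `C` whose image avoids all the `g i`, with `σ x = x` or `σ x` adjacent to `x`.

Iterating `σ` from `g i` until `C` is left traces a walk. By injectivity of `σ` and because no `g i`
is a value of `σ`, the iterates are pairwise distinct, within one walk and across different walks
(`iterate_eq_iff`). Hence, `C` being finite, each walk leaves `C`, and it does so into `U \ C = A`.
-/

/-- Orbits of a map that is injective on `C`, started at distinct points outside its image of `C`,
do not meet for as long as they stay in `C`, and none of them repeats a vertex. -/
lemma iterate_eq_iff {V ι : Type*} {C : Finset V} {σ : V → V} {g : ι → V}
    (hg : Function.Injective g) (hσ : ∀ x ∈ C, ∀ y ∈ C, σ x = σ y → x = y)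
    (hgσ : ∀ i, ∀ x ∈ C, g i ≠ σ x) (i j : ι) (m n : ℕ)
    (hm : ∀ l < m, σ^[l] (g i) ∈ C) (hn : ∀ l < n, σ^[l] (g j) ∈ C)
    (h : σ^[m] (g i) = σ^[n] (g j)) : i = j ∧ m = n := by
  induction m generalizing n with
  | zero =>
    cases n with
    | zero => exact ⟨hg h, rfl⟩
    | succ n =>
      rw [Function.iterate_succ_apply'] at h
      exact absurd h (hgσ i _ (hn n (by omega)))
  | succ m ih =>
    cases n with
    | zero =>
      rw [Function.iterate_succ_apply'] at h
      exact absurd h.symm (hgσ j _ (hm m (by omega)))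
    | succ n =>
      rw [Function.iterate_succ_apply', Function.iterate_succ_apply'] at h
      obtain ⟨h1, h2⟩ := ih n (fun l hl => hm l (by omega)) (fun l hl => hn l (by omega))
        (hσ _ (hm m (by omega)) _ (hn n (by omega)) h)
      exact ⟨h1, by omega⟩

lemma exists_iterate_not_mem {V ι : Type*} {C : Finset V} {σ : V → V} {g : ι → V}
    (hg : Function.Injective g) (hσ : ∀ x ∈ C, ∀ y ∈ C, σ x = σ y → x = y)
    (hgσ : ∀ i, ∀ x ∈ C, g i ≠ σ x) (i : ι) : ∃ n, σ^[n] (g i) ∉ C := by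
  by_contra! hall
  have hinj : Function.Injective (fun n : ℕ => (⟨σ^[n] (g i), hall n⟩ : C)) := fun m n h =>
    (iterate_eq_iff hg hσ hgσ i i m n (fun l _ => hall l) (fun l _ => hall l)
      (congrArg Subtype.val h)).2
  exact not_injective_infinite_finite _ hinj

lemma exists_walk_iterate {V : Type*} {G : SimpleGraph V} {C : Finset V} {σ : V → V} {v a : V}
    (ha : G.Adj v a) (hσ : ∀ x ∈ C, σ x = x ∨ G.Adj x (σ x)) (n : ℕ)
    (hn : ∀ l < n, σ^[l] a ∈ C) :
    ∃ p : G.Walk (σ^[n] a) v, ∀ w ∈ p.support, w = v ∨ ∃ l ≤ n, w = σ^[l] a := by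
  induction n with
  | zero =>
    rw [Function.iterate_zero_apply]
    refine ⟨SimpleGraph.Walk.cons ha.symm SimpleGraph.Walk.nil, fun w hw => ?_⟩
    simp only [SimpleGraph.Walk.support_cons, SimpleGraph.Walk.support_nil, List.mem_cons,
      List.not_mem_nil, or_false] at hw
    rcases hw with rfl | rfl
    · exact Or.inr ⟨0, le_rfl, rfl⟩
    · exact Or.inl rfl
  | succ n ih =>
    obtain ⟨p, hp⟩ := ih (fun l hl => hn l (by omega))
    have hp' : ∀ w ∈ p.support, w = v ∨ ∃ l ≤ n + 1, w = σ^[l] a := fun w hw =>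
      (hp w hw).imp_right fun ⟨l, hl, h⟩ => ⟨l, by omega, h⟩
    rw [Function.iterate_succ_apply']
    rcases hσ _ (hn n (by omega)) with h | h
    · rw [h]
      exact ⟨p, hp'⟩
    · refine ⟨SimpleGraph.Walk.cons h.symm p, fun w hw => ?_⟩
      rw [SimpleGraph.Walk.support_cons, List.mem_cons] at hw
      rcases hw with rfl | hw
      · exact Or.inr ⟨n + 1, le_rfl, (Function.iterate_succ_apply' σ n a).symm⟩
      · exact hp' w hw

/-- The consequence of Hall's theorem: if every `S` with `v ∈ S ⊆ insert v C` has at least `k`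
neighbours outside `D`, then there are `k` distinct neighbours `g i` of `v` and an injection `σ` on
`C` that moves each vertex along at most one edge and whose image avoids the `g i`. -/
lemma exists_starts_and_injection {V : Type*} [Fintype V] [DecidableEq V]
    (G : SimpleGraph V) [DecidableRel G.Adj] (k : ℕ) (v : V) (C D : Finset V)
    (hvC : v ∉ C) (hCD : Disjoint C D)
    (hk : ∀ S ⊆ C, k ≤ (Finset.univ.filter (fun w => w ∉ D ∧ w ∉ insert v S ∧
      ∃ x ∈ insert v S, G.Adj x w)).card) :
    ∃ (g : Fin k → V) (σ : V → V), Function.Injective g ∧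
      (∀ x ∈ C, ∀ y ∈ C, σ x = σ y → x = y) ∧ (∀ i, ∀ x ∈ C, g i ≠ σ x) ∧
      (∀ i, G.Adj v (g i)) ∧ (∀ x ∈ C, σ x = x ∨ G.Adj x (σ x)) ∧
      (∀ i, g i ∉ D) ∧ (∀ x ∈ C, σ x ∉ D ∧ σ x ≠ v) := by
  let t : Fin k ⊕ C → Finset V := Sum.elim
    (fun _ => Finset.univ.filter fun w => w ∉ D ∧ G.Adj v w)
    (fun x => Finset.univ.filter fun w => w ∉ D ∧ w ≠ v ∧ (w = x.1 ∨ G.Adj x.1 w))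
  have hall : ∀ s : Finset (Fin k ⊕ C), s.card ≤ (s.biUnion t).card := by
    intro s
    let S : Finset V := s.toRight.map (Function.Embedding.subtype _)
    have hS : ∀ x, x ∈ S ↔ ∃ h : x ∈ C, Sum.inr ⟨x, h⟩ ∈ s := by
      intro x; simp [S]
    have hSC : S ⊆ C := fun x hx => ((hS x).1 hx).1
    have hcard : s.card = s.toLeft.card + S.card := by
      rw [Finset.card_map, Finset.card_toLeft_add_card_toRight]
    have hSt : S ⊆ s.biUnion t := by
      intro x hx
      obtain ⟨hxC, hxs⟩ := (hS x).1 hx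
      refine Finset.mem_biUnion.2 ⟨_, hxs, ?_⟩
      simp only [t, Sum.elim_inr, Finset.mem_filter, Finset.mem_univ, true_and]
      exact ⟨Finset.disjoint_left.1 hCD hxC, fun h => hvC (h ▸ hxC), by simp⟩
    rcases s.toLeft.eq_empty_or_nonempty with h0 | ⟨i, hi⟩
    · rw [hcard, h0, Finset.card_empty, zero_add]
      exact Finset.card_le_card hSt
    · set N := Finset.univ.filter (fun w => w ∉ D ∧ w ∉ insert v S ∧
        ∃ x ∈ insert v S, G.Adj x w) with hN
      have hNt : N ⊆ s.biUnion t := by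
        intro w hw
        obtain ⟨hwD, hwS, x, hx, hxw⟩ := by simpa only [hN, Finset.mem_filter, Finset.mem_univ,
          true_and] using hw
        have hwv : w ≠ v := fun h => hwS (h ▸ Finset.mem_insert_self _ _)
        rcases Finset.mem_insert.1 hx with rfl | hx
        · refine Finset.mem_biUnion.2 ⟨_, Finset.mem_toLeft.1 hi, ?_⟩
          simp only [t, Sum.elim_inl, Finset.mem_filter, Finset.mem_univ, true_and]
          exact ⟨hwD, hxw⟩
        · obtain ⟨hxC, hxs⟩ := (hS x).1 hx
          refine Finset.mem_biUnion.2 ⟨_, hxs, ?_⟩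
          simp only [t, Sum.elim_inr, Finset.mem_filter, Finset.mem_univ, true_and]
          exact ⟨hwD, hwv, Or.inr hxw⟩
      have hdis : Disjoint N S := by
        rw [Finset.disjoint_left]
        intro w hw hwS
        exact (Finset.mem_filter.1 hw).2.2.1 (Finset.mem_insert_of_mem hwS)
      have h1 := Finset.card_le_card (Finset.union_subset hNt hSt)
      rw [Finset.card_union_of_disjoint hdis] at h1
      have h2 : k ≤ N.card := hk S hSC
      have h3 : s.toLeft.card ≤ k := by simpa using Finset.card_le_univ s.toLeft
      omega
  obtain ⟨φ, hφ, hφt⟩ := (Finset.all_card_le_biUnion_card_iff_exists_injective t).1 hall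
  -- The values of `σ` outside `C` play no role.
  let σ : V → V := fun x => if h : x ∈ C then φ (Sum.inr ⟨x, h⟩) else x
  have hσ : ∀ x (h : x ∈ C), σ x = φ (Sum.inr ⟨x, h⟩) := fun x h => dif_pos h
  have hl : ∀ i, φ (Sum.inl i) ∉ D ∧ G.Adj v (φ (Sum.inl i)) := fun i => by
    simpa [t] using hφt (Sum.inl i)
  have hr : ∀ x ∈ C, σ x ∉ D ∧ σ x ≠ v ∧ (σ x = x ∨ G.Adj x (σ x)) := fun x hx => by
    rw [hσ x hx]
    simpa [t] using hφt (Sum.inr ⟨x, hx⟩)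
  refine ⟨fun i => φ (Sum.inl i), σ, fun i j h => Sum.inl_injective (hφ h), ?_, ?_,
    fun i => (hl i).2, fun x hx => (hr x hx).2.2, fun i => (hl i).1,
    fun x hx => ⟨(hr x hx).1, (hr x hx).2.1⟩⟩
  · intro x hx y hy h
    rw [hσ x hx, hσ y hy] at h
    exact congrArg Subtype.val (Sum.inr_injective (hφ h))
  · intro i x hx h
    rw [hσ x hx] at h
    exact Sum.inl_ne_inr (hφ h)


theorem hybrid_case2_paths {V : Type*} [Fintype V] [DecidableEq V]
    (G : SimpleGraph V) [DecidableRel G.Adj] (f t : ℕ) (ht1 : 1 ≤ t) (htf : t ≤ f)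
    (hnbr : ∀ S : Finset V, S.Nonempty → S.card ≤ t →
      2 * f + 1 ≤ (Finset.univ.filter (fun w => w ∉ S ∧ ∃ x ∈ S, G.Adj x w)).card)
    (T F' : Finset V) (hdisj : Disjoint T F') (hT : T.card ≤ t)
    (hF' : F'.card ≤ f - T.card)
    (B' : Finset V) (hB'sub : B' ⊆ (T ∪ F')ᶜ) (hB'card : B'.card ≤ t)
    (v : V) (hv : v ∈ B')
    (A : Finset V) (hA : A = (T ∪ F' ∪ B')ᶜ) :
    ∃ (e : Fin (f + 1) → V) (P : ∀ i, G.Walk (e i) v),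
      (∀ i, e i ∈ A) ∧
      (∀ i, (P i).IsPath) ∧
      (∀ i j, i ≠ j → ∀ w, w ∈ (P i).support → w ∈ (P j).support → w = v) ∧
      (∀ i, ∀ w ∈ (P i).support, w ≠ e i → w ≠ v → w ∈ B' \ ({v} : Finset V)) := by
  have hvC : v ∉ B'.erase v := Finset.notMem_erase v B'
  have hBD : Disjoint B' (T ∪ F') := Finset.disjoint_left.2 fun x hx =>
    Finset.mem_compl.1 (hB'sub hx)
  obtain ⟨g, σ, hg, hσ, hgσ, hgv, hσadj, hgD, hσD⟩ :=
    exists_starts_and_injection G (f + 1) v (B'.erase v) (T ∪ F') hvC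
      (hBD.mono_left (Finset.erase_subset _ _)) (by
        intro S hS
        have hSB : insert v S ⊆ B' :=
          Finset.insert_subset hv (hS.trans (Finset.erase_subset _ _))
        have h1 := hnbr (insert v S) (Finset.insert_nonempty _ _)
          ((Finset.card_le_card hSB).trans hB'card)
        have h2 : (T ∪ F').card ≤ f := by
          have := Finset.card_union_le T F'
          omega
        have h3 := Finset.le_card_sdiff (T ∪ F')
          (Finset.univ.filter (fun w => w ∉ insert v S ∧ ∃ x ∈ insert v S, G.Adj x w))
        have h4 : (Finset.univ.filter (fun w => w ∉ insert v S ∧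
              ∃ x ∈ insert v S, G.Adj x w)) \ (T ∪ F') ⊆
            Finset.univ.filter (fun w => w ∉ T ∪ F' ∧ w ∉ insert v S ∧
              ∃ x ∈ insert v S, G.Adj x w) := by
          intro w hw
          rw [Finset.mem_sdiff, Finset.mem_filter] at hw
          exact Finset.mem_filter.2 ⟨Finset.mem_univ _, hw.2, hw.1.2⟩
        have h5 := Finset.card_le_card h4
        omega)
  have hex := exists_iterate_not_mem hg hσ hgσ
  -- `n i` is the first time at which the orbit of `g i` leaves `B' \ {v}`.
  let n : Fin (f + 1) → ℕ := fun i => Nat.find (hex i)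
  have hn : ∀ i, σ^[n i] (g i) ∉ B'.erase v := fun i => Nat.find_spec (hex i)
  have hlt : ∀ i, ∀ l < n i, σ^[l] (g i) ∈ B'.erase v := fun i l hl =>
    not_not.1 (Nat.find_min (hex i) hl)
  choose p hp using fun i => exists_walk_iterate (hgv i) hσadj (n i) (hlt i)
  refine ⟨fun i => σ^[n i] (g i), fun i => (p i).bypass, ?_, fun i => (p i).bypass_isPath, ?_, ?_⟩
  · intro i
    have hU : σ^[n i] (g i) ∉ T ∪ F' ∧ σ^[n i] (g i) ≠ v := by
      rcases hni : n i with _ | m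
      · exact ⟨hgD i, (hgv i).ne'⟩
      · rw [Function.iterate_succ_apply']
        exact hσD _ (hlt i m (by omega))
    have hB : σ^[n i] (g i) ∉ B' := fun h => hn i (Finset.mem_erase.2 ⟨hU.2, h⟩)
    rw [hA, Finset.mem_compl, Finset.mem_union]
    exact fun h => h.elim hU.1 hB
  · intro i j hij w hwi hwj
    rcases hp i w ((p i).support_bypass_subset_support hwi) with h | ⟨l, hl, rfl⟩
    · exact h
    rcases hp j _ ((p j).support_bypass_subset_support hwj) with h | ⟨m, hm, h⟩
    · exact h
    exact absurd (iterate_eq_iff hg hσ hgσ i j l m (fun q hq => hlt i q (by omega))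
      (fun q hq => hlt j q (by omega)) h).1 hij
  · intro i w hw hwe hwv
    rcases hp i w ((p i).support_bypass_subset_support hw) with h | ⟨l, hl, rfl⟩
    · exact absurd h hwv
    have hl' : l < n i := lt_of_le_of_ne hl fun h => hwe (by rw [h])
    rw [Finset.sdiff_singleton_eq_erase]
    exact hlt i l hl'
end
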